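/- Let k, l ≥ 0 with k + l ≥ 1, and consider the clause C(y_1, …, y_k, z_1, …, z_l) = y_1 ∨ ⋯ ∨ y_k ∨ ¬z_1 ∨ ⋯ ∨ ¬z_l in Boolean variables. Let f be the tropical polynomial in the k + l variables (y_1, …, y_k, z_1, …, z_l) given as the tropical product (⊙_{i=1}^k (0·y_i ⊕ 1)) ⊙ (0·z_1 ⊕ ⋯ ⊕ 0·z_l ⊕ 0). Then for every Boolean assignment (a_1, …, a_k, b_1, …, b_l) ∈ {True, False}^{k+l}, the clause evaluates to True if and only if the point (s(a_1), …, s(a_k), s(b_1), …, s(b_l)) ∈ ℝ^{k+l} lies in T(f), where s(True) = 1 and s(False) = 0. -/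

import Mathlib

open Finset Pointwise

/-- The affine-linear function given by a tropical term with coefficient `c`
and exponent vector `α`. -/
def tropTerm {n : ℕ} (c : ℝ) (α : Fin n → ℕ) (x : Fin n → ℝ) : ℝ :=
  c + ∑ j, (α j : ℝ) * x j

/-- The tropical hypersurface of the tropical polynomial with support `A`
and coefficients `c`: the set of points where the minimum of the terms is
attained at least twice. -/
def tropHyp {n : ℕ} (A : Finset (Fin n → ℕ)) (c : (Fin n → ℕ) → ℝ) :
    Set (Fin n → ℝ) :=
  {x | ∃ α ∈ A, ∃ β ∈ A, α ≠ β ∧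
    tropTerm (c α) α x = tropTerm (c β) β x ∧
    ∀ γ ∈ A, tropTerm (c α) α x ≤ tropTerm (c γ) γ x}

/-- A tropical polynomial: a (finite) support of exponent vectors, and coefficients. -/
structure TropPoly (n : ℕ) where
  supp : Finset (Fin n → ℕ)
  coeff : (Fin n → ℕ) → ℝ

def TropPoly.hyp {n : ℕ} (f : TropPoly n) : Set (Fin n → ℝ) :=
  tropHyp f.supp f.coeff

/-- Tropical product of two tropical polynomials. -/
noncomputable def TropPoly.mul {n : ℕ} (f g : TropPoly n) : TropPoly n where
  supp := f.supp + g.supp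
  coeff := fun γ =>
    sInf {r | ∃ α ∈ f.supp, ∃ β ∈ g.supp, α + β = γ ∧ r = f.coeff α + g.coeff β}

/-- The tropical multiplicative unit (the constant polynomial `0`). -/
def TropPoly.one (n : ℕ) : TropPoly n := ⟨{0}, fun _ => 0⟩

/-- Tropical product of a list of tropical polynomials. -/
noncomputable def TropPoly.listProd {n : ℕ} (l : List (TropPoly n)) : TropPoly n :=
  l.foldr TropPoly.mul (TropPoly.one n)

/-- The exponent vector `k · e_i`. -/
def single {n : ℕ} (i : Fin n) (k : ℕ) : Fin n → ℕ :=
  fun j => if j = i then k else 0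

/-- The Boolean-to-real encoding `s(True) = 1`, `s(False) = 0`. -/
def boolToReal (b : Bool) : ℝ := if b then 1 else 0

/-!
At a point `x`, the exponents of a tropical polynomial `f` whose terms attain the minimum form the
initial support `init f x`, and `x` lies on the tropical hypersurface of `f` exactly when
`init f x` has at least two elements. Initial supports are multiplicative: `init (f ⊙ g) x` is the
Minkowski sum `init f x + init g x`. By cancellation of exponents, a Minkowski sum of nonempty sets
has two elements exactly when one of the summands does, so the hypersurface of a product is the
union of the hypersurfaces of its factors. The hypersurface of `0·yᵢ ⊕ 1` is `yᵢ = 1`, and on the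
region `z ≥ 0` that of `0·z₁ ⊕ ⋯ ⊕ 0·z_l ⊕ 0` consists of the points where some `z_j` vanishes.
-/

section MinkowskiSum

variable {M : Type*}

lemma nontrivial_add_iff [Add M] [IsCancelAdd M] {s t : Set M} (hs : s.Nonempty)
    (ht : t.Nonempty) : (s + t).Nontrivial ↔ s.Nontrivial ∨ t.Nontrivial := by
  refine ⟨fun h => ?_, fun h => h.elim (·.add_right ht) (·.add_left hs)⟩
  contrapose! h
  exact h.1.image2 h.2 _

lemma nonempty_list_sum [AddMonoid M] {L : List (Set M)} (hL : ∀ s ∈ L, s.Nonempty) :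
    L.sum.Nonempty := by
  induction L with
  | nil => exact Set.zero_nonempty
  | cons s L ih =>
    rw [List.forall_mem_cons] at hL
    rw [List.sum_cons]
    exact hL.1.add (ih hL.2)

lemma nontrivial_list_sum_iff [AddMonoid M] [IsCancelAdd M] {L : List (Set M)}
    (hL : ∀ s ∈ L, s.Nonempty) : L.sum.Nontrivial ↔ ∃ s ∈ L, s.Nontrivial := by
  induction L with
  | nil => simp [Set.Subsingleton]
  | cons s L ih =>
    rw [List.forall_mem_cons] at hL
    rw [List.sum_cons, nontrivial_add_iff hL.1 (nonempty_list_sum hL.2), ih hL.2]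
    simp only [List.mem_cons, exists_eq_or_imp]

end MinkowskiSum

section TropTerm

variable {n : ℕ}

lemma tropTerm_add (c d : ℝ) (α β : Fin n → ℕ) (x : Fin n → ℝ) :
    tropTerm (c + d) (α + β) x = tropTerm c α x + tropTerm d β x := by
  simp only [tropTerm, Pi.add_apply, Nat.cast_add, add_mul, Finset.sum_add_distrib]
  ring

lemma tropTerm_mono {c d : ℝ} (h : c ≤ d) (α : Fin n → ℕ) (x : Fin n → ℝ) :
    tropTerm c α x ≤ tropTerm d α x :=
  add_le_add_left h _

lemma tropTerm_zero (c : ℝ) (x : Fin n → ℝ) : tropTerm c 0 x = c := by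
  simp [tropTerm]

lemma tropTerm_single_one (c : ℝ) (i : Fin n) (x : Fin n → ℝ) :
    tropTerm c (single i 1) x = c + x i := by
  simp [tropTerm, single]

lemma single_one_ne_zero (i : Fin n) : single i 1 ≠ 0 := fun h => by
  simpa [single] using congrFun h i

end TropTerm

namespace TropPoly

variable {n : ℕ} {f g : TropPoly n} {α β : Fin n → ℕ} {x : Fin n → ℝ}

/-- The value at `x` of the term of `f` with exponent vector `α`. -/
def term (f : TropPoly n) (α : Fin n → ℕ) (x : Fin n → ℝ) : ℝ :=
  tropTerm (f.coeff α) α x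

/-- The initial support of `f` at `x`: the exponent vectors in the support of `f` whose terms attain
the minimum `f(x)`. -/
def initialSupp (f : TropPoly n) (x : Fin n → ℝ) : Set (Fin n → ℕ) :=
  {α | α ∈ f.supp ∧ ∀ γ ∈ f.supp, f.term α x ≤ f.term γ x}

lemma initialSupp_nonempty (hf : f.supp.Nonempty) (x : Fin n → ℝ) :
    (f.initialSupp x).Nonempty :=
  f.supp.exists_min_image (f.term · x) hf

lemma mem_initialSupp_iff_term_eq (hβ : β ∈ f.initialSupp x) :
    α ∈ f.initialSupp x ↔ α ∈ f.supp ∧ f.term α x = f.term β x :=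
  ⟨fun hα => ⟨hα.1, (hα.2 β hβ.1).antisymm (hβ.2 α hα.1)⟩,
    fun ⟨hα, heq⟩ => ⟨hα, heq ▸ hβ.2⟩⟩

lemma mem_hyp_iff_initialSupp_nontrivial : x ∈ f.hyp ↔ (f.initialSupp x).Nontrivial := by
  constructor
  · rintro ⟨α, hα, β, hβ, hne, heq, hmin⟩
    have hα' : α ∈ f.initialSupp x := ⟨hα, hmin⟩
    exact ⟨α, hα', β, (mem_initialSupp_iff_term_eq hα').2 ⟨hβ, heq.symm⟩, hne⟩
  · rintro ⟨α, hα, β, hβ, hne⟩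
    exact ⟨α, hα.1, β, hβ.1, hne, ((mem_initialSupp_iff_term_eq hβ).1 hα).2, hα.2⟩

lemma mem_hyp_iff_of_mem_initialSupp (hβ : β ∈ f.initialSupp x) :
    x ∈ f.hyp ↔ ∃ α ∈ f.supp, α ≠ β ∧ f.term α x = f.term β x := by
  rw [mem_hyp_iff_initialSupp_nontrivial, Set.nontrivial_iff_exists_ne hβ]
  simp only [mem_initialSupp_iff_term_eq hβ, and_assoc, and_comm (a := _ ≠ β)]

lemma mem_hyp_iff_of_supp_eq_pair (hsupp : f.supp = {α, β}) (hne : α ≠ β) :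
    x ∈ f.hyp ↔ f.term α x = f.term β x := by
  constructor
  · rintro ⟨γ, hγ, δ, hδ, hγδ, heq, -⟩
    rw [hsupp, Finset.mem_insert, Finset.mem_singleton] at hγ hδ
    rcases hγ with rfl | rfl <;> rcases hδ with rfl | rfl
    · exact absurd rfl hγδ
    · exact heq
    · exact heq.symm
    · exact absurd rfl hγδ
  · intro heq
    have hβ : β ∈ f.initialSupp x := by simp [initialSupp, hsupp, heq]
    exact (mem_hyp_iff_of_mem_initialSupp hβ).2 ⟨α, by simp [hsupp], hne, heq⟩

lemma isLeast_mul_coeff {γ : Fin n → ℕ} (hγ : γ ∈ (f.mul g).supp) :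
    IsLeast {r | ∃ α ∈ f.supp, ∃ β ∈ g.supp, α + β = γ ∧ r = f.coeff α + g.coeff β}
      ((f.mul g).coeff γ) := by
  set S : Set ℝ := {r | ∃ α ∈ f.supp, ∃ β ∈ g.supp, α + β = γ ∧ r = f.coeff α + g.coeff β}
  have hfin : S.Finite := by
    refine (Set.Finite.image2 (fun α β => f.coeff α + g.coeff β) f.supp.finite_toSet
      g.supp.finite_toSet).subset ?_
    rintro r ⟨α, hα, β, hβ, -, rfl⟩
    exact Set.mem_image2_of_mem hα hβ
  have hne : S.Nonempty := by
    obtain ⟨α, hα, β, hβ, h⟩ := Finset.mem_add.1 hγ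
    exact ⟨_, α, hα, β, hβ, h, rfl⟩
  exact ⟨hne.csInf_mem hfin, fun r hr => csInf_le hfin.bddBelow hr⟩

lemma mul_term_add_le (hα : α ∈ f.supp) (hβ : β ∈ g.supp) (x : Fin n → ℝ) :
    (f.mul g).term (α + β) x ≤ f.term α x + g.term β x := by
  rw [term, term, term, ← tropTerm_add]
  exact tropTerm_mono ((isLeast_mul_coeff (add_mem_add hα hβ)).2 ⟨α, hα, β, hβ, rfl, rfl⟩) _ _

lemma exists_mul_term_eq {γ : Fin n → ℕ} (hγ : γ ∈ (f.mul g).supp) (x : Fin n → ℝ) :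
    ∃ α ∈ f.supp, ∃ β ∈ g.supp, α + β = γ ∧
      (f.mul g).term γ x = f.term α x + g.term β x := by
  obtain ⟨α, hα, β, hβ, rfl, hcoeff⟩ := (isLeast_mul_coeff hγ).1
  exact ⟨α, hα, β, hβ, rfl, by rw [term, hcoeff, tropTerm_add, term, term]⟩

lemma initialSupp_mul (f g : TropPoly n) (x : Fin n → ℝ) :
    (f.mul g).initialSupp x = f.initialSupp x + g.initialSupp x := by
  ext γ
  constructor
  · rintro ⟨hγ, hmin⟩
    obtain ⟨α, hα, β, hβ, rfl, heq⟩ := exists_mul_term_eq hγ x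
    have sum_le {α' β' : Fin n → ℕ} (hα' : α' ∈ f.supp) (hβ' : β' ∈ g.supp) :
        f.term α x + g.term β x ≤ f.term α' x + g.term β' x :=
      heq ▸ (hmin _ (add_mem_add hα' hβ')).trans (mul_term_add_le hα' hβ' x)
    exact Set.add_mem_add ⟨hα, fun α' hα' => le_of_add_le_add_right (sum_le hα' hβ)⟩
      ⟨hβ, fun β' hβ' => le_of_add_le_add_left (sum_le hα hβ')⟩
  · rintro ⟨α, ⟨hα, hαmin⟩, β, ⟨hβ, hβmin⟩, rfl⟩
    refine ⟨add_mem_add hα hβ, fun γ hγ => ?_⟩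
    obtain ⟨α', hα', β', hβ', -, heq⟩ := exists_mul_term_eq hγ x
    calc (f.mul g).term (α + β) x
        ≤ f.term α x + g.term β x := mul_term_add_le hα hβ x
      _ ≤ f.term α' x + g.term β' x := add_le_add (hαmin α' hα') (hβmin β' hβ')
      _ = (f.mul g).term γ x := heq.symm

lemma initialSupp_one (x : Fin n → ℝ) : (one n).initialSupp x = 0 := by
  ext α
  simp +contextual [initialSupp, one]

lemma initialSupp_listProd (L : List (TropPoly n)) (x : Fin n → ℝ) :
    (listProd L).initialSupp x = (L.map (·.initialSupp x)).sum := by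
  induction L with
  | nil => exact initialSupp_one x
  | cons f L ih => rw [List.map_cons, List.sum_cons, ← ih, ← initialSupp_mul]; rfl

lemma mem_hyp_listProd_iff {L : List (TropPoly n)} (hL : ∀ f ∈ L, f.supp.Nonempty)
    {x : Fin n → ℝ} : x ∈ (listProd L).hyp ↔ ∃ f ∈ L, x ∈ f.hyp := by
  have hinit : ∀ s ∈ L.map (·.initialSupp x), s.Nonempty :=
    List.forall_mem_map.2 fun f hf => initialSupp_nonempty (hL f hf) x
  simp only [mem_hyp_iff_initialSupp_nontrivial, initialSupp_listProd,
    nontrivial_list_sum_iff hinit, List.mem_map, exists_exists_and_eq_and]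

/-- The tropical polynomial `0·x_i ⊕ c`, representing `x ↦ min(x_i, c)`. -/
def minVarConst (i : Fin n) (c : ℝ) : TropPoly n :=
  ⟨{single i 1, 0}, fun α => if α = 0 then c else 0⟩

lemma mem_hyp_minVarConst_iff {i : Fin n} {c : ℝ} : x ∈ (minVarConst i c).hyp ↔ x i = c := by
  rw [mem_hyp_iff_of_supp_eq_pair rfl (single_one_ne_zero i)]
  simp [minVarConst, term, tropTerm_single_one, tropTerm_zero, single_one_ne_zero]

/-- The tropical polynomial `⊕_j 0·x_{z j} ⊕ 0`, representing the minimum of `0` and the variables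
selected by `z`. -/
def minVarsZero {ι : Type*} [Fintype ι] (z : ι → Fin n) : TropPoly n :=
  ⟨(Finset.univ.image fun j => single (z j) 1) ∪ {0}, fun _ => 0⟩

lemma mem_hyp_minVarsZero_iff {ι : Type*} [Fintype ι] {z : ι → Fin n} (hx : ∀ j, 0 ≤ x (z j)) :
    x ∈ (minVarsZero z).hyp ↔ ∃ j, x (z j) = 0 := by
  have zero_mem : 0 ∈ (minVarsZero z).initialSupp x := by
    simp [initialSupp, minVarsZero, term, tropTerm_single_one, tropTerm_zero, or_imp,
      forall_and, hx]
  rw [mem_hyp_iff_of_mem_initialSupp zero_mem]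
  simp [minVarsZero, term, tropTerm_single_one, tropTerm_zero, single_one_ne_zero, or_and_right,
    exists_or]

/-- The tropical polynomial `(⊙_i (0·x_{y i} ⊕ 1)) ⊙ (⊕_j 0·x_{z j} ⊕ 0)` of the clause with
positive literals `x_{y i}` and negative literals `¬x_{z j}`. -/
noncomputable def clause {k l : ℕ} (y : Fin k → Fin n) (z : Fin l → Fin n) : TropPoly n :=
  listProd ((List.ofFn fun i => minVarConst (y i) 1) ++ [minVarsZero z])

end TropPoly

lemma boolToReal_nonneg (b : Bool) : 0 ≤ boolToReal b := by
  cases b <;> simp [boolToReal]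

lemma boolToReal_eq_one_iff {b : Bool} : boolToReal b = 1 ↔ b = true := by
  simp [boolToReal]

lemma boolToReal_eq_zero_iff {b : Bool} : boolToReal b = 0 ↔ b = false := by
  simp [boolToReal]

theorem clause_hypersurface_general {n k l : ℕ} (y : Fin k → Fin n) (z : Fin l → Fin n)
    (x : Fin n → ℝ) (hx : ∀ j, 0 ≤ x (z j)) :
    ((∃ i, x (y i) = 1) ∨ ∃ j, x (z j) = 0) ↔ x ∈ (TropPoly.clause y z).hyp := by
  have hsupp : ∀ f ∈ (List.ofFn fun i => TropPoly.minVarConst (y i) 1) ++ [TropPoly.minVarsZero z],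
      f.supp.Nonempty := by
    simp only [List.forall_mem_append, List.forall_mem_ofFn_iff, List.forall_mem_singleton]
    exact ⟨fun i => Finset.insert_nonempty _ _, 0, by simp [TropPoly.minVarsZero]⟩
  rw [TropPoly.clause, TropPoly.mem_hyp_listProd_iff hsupp]
  simp only [List.mem_append, List.mem_ofFn, List.mem_singleton, or_and_right, exists_or,
    exists_exists_eq_and, exists_eq_left, TropPoly.mem_hyp_minVarConst_iff,
    TropPoly.mem_hyp_minVarsZero_iff hx]

/-- The clause `y₁ ∨ ⋯ ∨ y_k ∨ ¬z₁ ∨ ⋯ ∨ ¬z_l` is satisfied by a Boolean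
assignment `(a, b)` if and only if the corresponding 0/1-point lies on the
tropical hypersurface of
`(⊙_{i=1}^k (0·yᵢ ⊕ 1)) ⊙ (0·z₁ ⊕ ⋯ ⊕ 0·z_l ⊕ 0)`. -/
theorem clause_hypersurface (k l : ℕ) (hkl : 1 ≤ k + l)
    (a : Fin k → Bool) (b : Fin l → Bool) :
    ((∃ i, a i = true) ∨ (∃ j, b j = false)) ↔
      (Fin.addCases (fun i => boolToReal (a i)) (fun j => boolToReal (b j)) :
          Fin (k + l) → ℝ) ∈
        (TropPoly.listProd
          ((List.ofFn fun i : Fin k =>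
              (⟨{single (Fin.castAdd l i) 1, 0},
                fun α => if α = 0 then (1 : ℝ) else 0⟩ : TropPoly (k + l))) ++
            [(⟨(Finset.univ.image fun j : Fin l => single (Fin.natAdd k j) 1) ∪ {0},
                fun _ => (0 : ℝ)⟩ : TropPoly (k + l))])).hyp := by
  refine Iff.trans ?_ (clause_hypersurface_general (Fin.castAdd l) (Fin.natAdd k) _ ?_)
  · simp only [Fin.addCases_left, Fin.addCases_right, boolToReal_eq_one_iff, boolToReal_eq_zero_iff]
  · simp only [Fin.addCases_right, boolToReal_nonneg, implies_true]
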